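/- Finite model property of S4DS: for every bimodal formula A, A ∈ S4DS if and only if F ⊨ A for every finite S4D-frame F that is a DS-frame. -/

import Mathlib

/-!
Completeness is proved in two stages. First, the maximal consistent sets of S4DS form an S4D-frame
which is a DS-frame, so a non-theorem fails in the canonical model. Second, that countermodel is
made finite by purely semantic means. In an S4D-frame the points `R_D`-accessible from `x`,
together with `x`, form a generated subframe in which distinct points are always `R_D`-related.
This totality survives any quotient and yields both pseudo-transitivity and `R ⊆ R_D ∪ Id`, so one
may filtrate `R` transitively and `R_D` minimally. It also saves the DS-condition: an
`R_D`-irreflexive class cannot contain two points, so it is a single irreflexive point, and a proper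
`R`-successor of this point lies in another class.
-/

/-- Bimodal formulas: propositional letters, falsum, implication, box, and
the difference modality `[≠]` (called `dbox` here). -/
inductive BForm : Type
  | var : ℕ → BForm
  | bot : BForm
  | imp : BForm → BForm → BForm
  | box : BForm → BForm
  | dbox : BForm → BForm
  deriving DecidableEq

namespace BForm

/-- Classical negation. -/
def neg (A : BForm) : BForm := imp A bot

/-- Classical conjunction. -/
def conj (A B : BForm) : BForm := neg (imp A (neg B))

/-- `◇A = ¬□¬A`. -/
def dia (A : BForm) : BForm := neg (box (neg A))

/-- `⟨≠⟩A = ¬[≠]¬A`. -/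
def ddia (A : BForm) : BForm := neg (dbox (neg A))

end BForm

/-- Truth at a point of a Kripke model over a frame `(W, R, R_D)`. -/
def ksat {W : Type} (R RD : W → W → Prop) (θ : ℕ → Set W) : W → BForm → Prop
  | x, .var n => x ∈ θ n
  | _, .bot => False
  | x, .imp A B => ksat R RD θ x A → ksat R RD θ x B
  | x, .box A => ∀ y, R x y → ksat R RD θ y A
  | x, .dbox A => ∀ y, RD x y → ksat R RD θ y A

/-- Validity in a Kripke frame: truth at every point under every valuation. -/
def kvalid {W : Type} (R RD : W → W → Prop) (A : BForm) : Prop :=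
  ∀ (θ : ℕ → Set W) (x : W), ksat R RD θ x A

/-- Truth at a point of a topological model. -/
def tsat {X : Type} [TopologicalSpace X] (θ : ℕ → Set X) : X → BForm → Prop
  | x, .var n => x ∈ θ n
  | _, .bot => False
  | x, .imp A B => tsat θ x A → tsat θ x B
  | x, .box A => ∃ U : Set X, IsOpen U ∧ x ∈ U ∧ ∀ y ∈ U, tsat θ y A
  | x, .dbox A => ∀ y, y ≠ x → tsat θ y A

/-- Validity in a topological space. -/
def tvalid (X : Type) [TopologicalSpace X] (A : BForm) : Prop :=
  ∀ (θ : ℕ → Set X) (x : X), tsat θ x A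

/-- Uniform substitution of formulas for propositional letters. -/
def substF (σ : ℕ → BForm) : BForm → BForm
  | .var n => σ n
  | .bot => .bot
  | .imp A B => .imp (substF σ A) (substF σ B)
  | .box A => .box (substF σ A)
  | .dbox A => .dbox (substF σ A)

/-- Boolean evaluation of a formula, treating letters and modal formulas as atoms. -/
def beval (v : BForm → Bool) : BForm → Bool
  | .var n => v (.var n)
  | .bot => false
  | .imp A B => !(beval v A) || beval v B
  | .box A => v (.box A)
  | .dbox A => v (.dbox A)

/-- A classical tautology of the bimodal language. -/
def Tautology (A : BForm) : Prop := ∀ v : BForm → Bool, beval v A = true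

/-- The letter `p`. -/
def pLet : BForm := .var 0
/-- The letter `q`. -/
def qLet : BForm := .var 1

/-- The least bimodal logic containing `K₂`, the S4D axioms and the extra axioms `Ax`,
closed under modus ponens, uniform substitution, and both necessitation rules. -/
inductive Logic (Ax : Set BForm) : BForm → Prop
  | taut {A : BForm} : Tautology A → Logic Ax A
  | axKBox : Logic Ax (.imp (.box (.imp pLet qLet)) (.imp (.box pLet) (.box qLet)))
  | axKD : Logic Ax (.imp (.dbox (.imp pLet qLet)) (.imp (.dbox pLet) (.dbox qLet)))
  | axBD : Logic Ax (.imp pLet (.dbox (BForm.ddia pLet)))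
  | ax4mD : Logic Ax (.imp (BForm.conj pLet (.dbox pLet)) (.dbox (.dbox pLet)))
  | axTBox : Logic Ax (.imp (.box pLet) pLet)
  | ax4Box : Logic Ax (.imp (.box pLet) (.box (.box pLet)))
  | axDBox : Logic Ax (.imp (BForm.conj (.dbox pLet) pLet) (.box pLet))
  | extra {A : BForm} : A ∈ Ax → Logic Ax A
  | mp {A B : BForm} : Logic Ax (.imp A B) → Logic Ax A → Logic Ax B
  | subst {A : BForm} (σ : ℕ → BForm) : Logic Ax A → Logic Ax (substF σ A)
  | necBox {A : BForm} : Logic Ax A → Logic Ax (.box A)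
  | necD {A : BForm} : Logic Ax A → Logic Ax (.dbox A)

/-- The axiom (DS): `[≠]p → ◇p`. -/
def dsAx : BForm := .imp (.dbox pLet) (BForm.dia pLet)

/-- The axiom (AT₁): `[≠]p → [≠]□p`. -/
def at1Ax : BForm := .imp (.dbox pLet) (.dbox (.box pLet))

/-- The logic S4D. -/
def S4D : BForm → Prop := Logic ∅

/-- The logic S4DS = S4D + (DS). -/
def S4DS : BForm → Prop := Logic {dsAx}

/-- The logic S4DT1S = S4DS + (AT₁). -/
def S4DT1S : BForm → Prop := Logic {dsAx, at1Ax}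

/-- `(W, R, R_D)` is an S4D-frame: `R` is reflexive and transitive, `R_D` is
symmetric and pseudo-transitive, and `R ⊆ R_D ∪ Id`. -/
structure IsS4DFrame {W : Type} (R RD : W → W → Prop) : Prop where
  refl : ∀ x, R x x
  trans : ∀ ⦃x y z⦄, R x y → R y z → R x z
  symm : ∀ ⦃x y⦄, RD x y → RD y x
  ptrans : ∀ ⦃x y z⦄, RD x y → RD y z → x ≠ z → RD x z
  inc : ∀ ⦃x y⦄, R x y → RD x y ∨ x = y

/-- A T₁-frame: every `R_D`-irreflexive point is `R`-minimal. -/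
def IsT1Frame {W : Type} (R RD : W → W → Prop) : Prop :=
  ∀ x, ¬ RD x x → ∀ y, R y x → y = x

/-- A DS-frame: every `R_D`-irreflexive point has an `R`-successor distinct from itself. -/
def IsDSFrame {W : Type} (R RD : W → W → Prop) : Prop :=
  ∀ x, ¬ RD x x → ∃ y, y ≠ x ∧ R x y

/-- A cd-p-morphism from a topological space `X` onto a Kripke frame `(W, R, R_D)`. -/
structure IsCdPMorphism {X : Type} [TopologicalSpace X] {W : Type}
    (R RD : W → W → Prop) (f : X → W) : Prop where
  surj : Function.Surjective f
  cl : ∀ w : W, closure (f ⁻¹' {w}) = f ⁻¹' {v | R v w}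
  diff : ∀ w : W, {x : X | ∃ y, y ≠ x ∧ f y = w} = f ⁻¹' {v | RD v w}

/-- A p-morphism between Kripke frames. -/
structure IsPMorphism {W W' : Type} (R RD : W → W → Prop) (R' RD' : W' → W' → Prop)
    (f : W → W') : Prop where
  surj : Function.Surjective f
  forth : ∀ ⦃x y⦄, R x y → R' (f x) (f y)
  forthD : ∀ ⦃x y⦄, RD x y → RD' (f x) (f y)
  back : ∀ x z, R' (f x) z → ∃ y, R x y ∧ f y = z
  backD : ∀ x z, RD' (f x) z → ∃ y, RD x y ∧ f y = z

/-- The Alexandrov topology on `W` whose open sets are the `R`-upward-closed sets. -/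
def alexandrov {W : Type} (R : W → W → Prop) : TopologicalSpace W where
  IsOpen U := ∀ ⦃x⦄, x ∈ U → ∀ ⦃y⦄, R x y → y ∈ U
  isOpen_univ := fun _ _ _ _ => trivial
  isOpen_inter := fun _ _ hU hV x hx y hxy => ⟨hU hx.1 hxy, hV hx.2 hxy⟩
  isOpen_sUnion := fun _ hS x hx y hxy => by
    obtain ⟨U, hU, hxU⟩ := hx
    exact ⟨U, hU, hS U hU hxU hxy⟩

/-! ### Soundness -/

section Soundness

variable {W : Type} {R RD : W → W → Prop} {θ : ℕ → Set W} {x : W} {A B : BForm}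

theorem ksat_conj : ksat R RD θ x (.conj A B) ↔ ksat R RD θ x A ∧ ksat R RD θ x B := by
  simp only [BForm.conj, BForm.neg, ksat]
  tauto

theorem ksat_dia : ksat R RD θ x (.dia A) ↔ ∃ y, R x y ∧ ksat R RD θ y A := by
  simp only [BForm.dia, BForm.neg, ksat, imp_false, not_forall, not_not, exists_prop]

theorem ksat_ddia : ksat R RD θ x (.ddia A) ↔ ∃ y, RD x y ∧ ksat R RD θ y A := by
  simp only [BForm.ddia, BForm.neg, ksat, imp_false, not_forall, not_not, exists_prop]

theorem ksat_substF (σ : ℕ → BForm) :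
    ksat R RD θ x (substF σ A) ↔ ksat R RD (fun n => {y | ksat R RD θ y (σ n)}) x A := by
  induction A generalizing x with
  | var n => rfl
  | bot => rfl
  | imp A B ihA ihB => simp only [substF, ksat, ihA, ihB]
  | box A ih => simp only [substF, ksat, ih]
  | dbox A ih => simp only [substF, ksat, ih]

theorem beval_imp_eq_true {v : BForm → Bool} :
    beval v (.imp A B) = true ↔ (beval v A = true → beval v B = true) := by
  simp only [beval, Bool.or_eq_true, Bool.not_eq_true', Bool.eq_false_iff, imp_iff_not_or, ne_eq]

theorem beval_neg_eq_true {v : BForm → Bool} :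
    beval v (.neg A) = true ↔ ¬ beval v A = true := by
  rw [BForm.neg, beval_imp_eq_true, beval, imp_iff_not (Bool.false_ne_true)]

open Classical in
theorem beval_decide_ksat :
    beval (fun B => decide (ksat R RD θ x B)) A = true ↔ ksat R RD θ x A := by
  induction A with
  | imp A B ihA ihB => rw [beval_imp_eq_true, ihA, ihB, ksat]
  | bot => simp only [beval, ksat, Bool.false_eq_true]
  | var | box | dbox => simp only [beval, decide_eq_true_eq]

theorem Tautology.ksat (h : Tautology A) : ksat R RD θ x A := by
  classical exact beval_decide_ksat.1 (h _)

theorem IsS4DFrame.kvalid_of_logic {Ax : Set BForm} (hF : IsS4DFrame R RD)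
    (hAx : ∀ B ∈ Ax, kvalid R RD B) (h : Logic Ax A) : kvalid R RD A := by
  induction h with
  | taut h => exact fun _ _ => h.ksat
  | axKBox | axKD => exact fun _ _ hpq hp y hy => hpq y hy (hp y hy)
  | axBD => exact fun _ x hp _ hy => ksat_ddia.2 ⟨x, hF.symm hy, hp⟩
  | ax4mD =>
    intro _ x h y hy z hz
    obtain ⟨hp, hDp⟩ := ksat_conj.1 h
    obtain rfl | hne := eq_or_ne x z
    · exact hp
    · exact hDp z (hF.ptrans hy hz hne)
  | axTBox => exact fun _ x h => h x (hF.refl x)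
  | ax4Box => exact fun _ _ h _ hy z hz => h z (hF.trans hy hz)
  | axDBox =>
    intro _ x h y hy
    obtain ⟨hDp, hp⟩ := ksat_conj.1 h
    obtain hD | rfl := hF.inc hy
    · exact hDp y hD
    · exact hp
  | extra h => exact hAx _ h
  | mp _ _ ihAB ihA => exact fun θ x => ihAB θ x (ihA θ x)
  | subst σ _ ih => exact fun _ x => (ksat_substF σ).2 (ih _ x)
  | necBox _ ih | necD _ ih => exact fun θ _ y _ => ih θ y

theorem IsDSFrame.exists_R_RD (hDS : IsDSFrame R RD) (hF : IsS4DFrame R RD) (x : W) :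
    ∃ y, R x y ∧ RD x y := by
  by_cases hx : RD x x
  · exact ⟨x, hF.refl x, hx⟩
  · obtain ⟨y, hne, hxy⟩ := hDS x hx
    exact ⟨y, hxy, (hF.inc hxy).resolve_right hne.symm⟩

theorem IsDSFrame.kvalid_dsAx (hDS : IsDSFrame R RD) (hF : IsS4DFrame R RD) :
    kvalid R RD dsAx := by
  intro θ x h
  obtain ⟨y, hR, hD⟩ := hDS.exists_R_RD hF x
  exact ksat_dia.2 ⟨y, hR, h y hD⟩

end Soundness

/-! ### Theories and maximal consistent sets -/

/-- A theory over `Logic Ax`: a set of formulas containing its theorems and closed under modus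
ponens, but not necessarily under substitution or necessitation. -/
structure IsTheory (Ax T : Set BForm) : Prop where
  mem_of_logic : ∀ {A}, Logic Ax A → A ∈ T
  mp : ∀ {A B}, BForm.imp A B ∈ T → A ∈ T → B ∈ T

/-- A maximal consistent set of `Logic Ax`, that is, a point of its canonical model. Maximality is
expressed as deciding every formula. -/
structure MCS (Ax : Set BForm) : Type where
  carrier : Set BForm
  isTheory : IsTheory Ax carrier
  bot_notMem : BForm.bot ∉ carrier
  mem_or_neg_mem : ∀ A, A ∈ carrier ∨ BForm.neg A ∈ carrier

instance (Ax : Set BForm) : SetLike (MCS Ax) BForm where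
  coe := MCS.carrier
  coe_injective x y h := by
    cases x
    cases y
    congr

namespace IsTheory

variable {Ax T : Set BForm} {A B : BForm}

theorem logic (Ax : Set BForm) : IsTheory Ax {A | Logic Ax A} where
  mem_of_logic h := h
  mp := Logic.mp

theorem mem_of_tautology (hT : IsTheory Ax T) (h : Tautology A) : A ∈ T :=
  hT.mem_of_logic (.taut h)

theorem imp_mem_of_mem (hT : IsTheory Ax T) (A : BForm) (hB : B ∈ T) : BForm.imp A B ∈ T := by
  have taut : Tautology (.imp B (.imp A B)) := fun v => by simp only [beval_imp_eq_true]; tauto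
  exact hT.mp (hT.mem_of_tautology taut) hB

theorem imp_self_mem (hT : IsTheory Ax T) (A : BForm) : BForm.imp A A ∈ T :=
  hT.mem_of_tautology fun _ => beval_imp_eq_true.2 id

/-- The deduction theorem: the theory generated by `T` and `A` is `{B | A → B ∈ T}`. -/
theorem adjoin (hT : IsTheory Ax T) (A : BForm) : IsTheory Ax {B | BForm.imp A B ∈ T} where
  mem_of_logic hB := hT.imp_mem_of_mem A (hT.mem_of_logic hB)
  mp {B C} hBC hB := by
    have taut : Tautology (.imp (.imp A (.imp B C)) (.imp (.imp A B) (.imp A C))) :=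
      fun v => by simp only [beval_imp_eq_true]; tauto
    exact hT.mp (hT.mp (hT.mem_of_tautology taut) hBC) hB

theorem sUnion {c : Set (Set BForm)} (hc : ∀ T ∈ c, IsTheory Ax T) (hne : c.Nonempty)
    (hdir : DirectedOn (· ⊆ ·) c) : IsTheory Ax (⋃₀ c) where
  mem_of_logic h := by
    obtain ⟨T, hT⟩ := hne
    exact ⟨T, hT, (hc T hT).mem_of_logic h⟩
  mp := by
    rintro A B ⟨S, hS, hAB⟩ ⟨T, hT, hA⟩
    obtain ⟨U, hU, hSU, hTU⟩ := hdir S hS T hT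
    exact ⟨U, hU, (hc U hU).mp (hSU hAB) (hTU hA)⟩

theorem exists_maximal_notMem (hT : IsTheory Ax T) (hB : B ∉ T) :
    ∃ M, T ⊆ M ∧ Maximal (fun S => IsTheory Ax S ∧ B ∉ S) M := by
  refine zorn_subset_nonempty {S | IsTheory Ax S ∧ B ∉ S} (fun c hc hchain hne => ?_) T ⟨hT, hB⟩
  refine ⟨⋃₀ c, ⟨sUnion (fun S hS => (hc hS).1) hne hchain.directedOn, ?_⟩,
    fun S hS => Set.subset_sUnion_of_mem hS⟩
  rintro ⟨S, hS, hBS⟩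
  exact (hc hS).2 hBS

theorem imp_mem_of_maximal_notMem (hT : Maximal (fun S => IsTheory Ax S ∧ B ∉ S) T)
    (hA : A ∉ T) : BForm.imp A B ∈ T := by
  by_contra hAB
  have hle : T ⊆ {C | BForm.imp A C ∈ T} := fun C => hT.prop.1.imp_mem_of_mem A
  exact hA (hT.le_of_ge ⟨hT.prop.1.adjoin A, hAB⟩ hle (hT.prop.1.imp_self_mem A))

theorem mem_or_neg_mem_of_maximal_notMem (hT : Maximal (fun S => IsTheory Ax S ∧ B ∉ S) T)
    (A : BForm) : A ∈ T ∨ BForm.neg A ∈ T := by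
  by_contra! h
  have taut : Tautology (.imp (.imp A B) (.imp (.imp (.neg A) B) B)) :=
    fun v => by simp only [beval_imp_eq_true, beval_neg_eq_true]; tauto
  have hTh := hT.prop.1
  exact hT.prop.2 (hTh.mp (hTh.mp (hTh.mem_of_tautology taut) (imp_mem_of_maximal_notMem hT h.1))
    (imp_mem_of_maximal_notMem hT h.2))

theorem exists_mcs_notMem (hT : IsTheory Ax T) (hB : B ∉ T) :
    ∃ x : MCS Ax, T ⊆ x ∧ B ∉ x := by
  obtain ⟨M, hTM, hM⟩ := hT.exists_maximal_notMem hB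
  have bot_notMem : BForm.bot ∉ M := fun h => hM.prop.2 <|
    hM.prop.1.mp (hM.prop.1.mem_of_tautology fun _ => rfl) h
  exact ⟨⟨M, hM.prop.1, bot_notMem, mem_or_neg_mem_of_maximal_notMem hM⟩, hTM, hM.prop.2⟩

end IsTheory

/-! ### The canonical model -/

/-- A unary connective `m` satisfying axiom K and the necessitation rule of `Logic Ax`; it covers
`□` and `[≠]` at once. -/
structure IsNormalModality (Ax : Set BForm) (m : BForm → BForm) : Prop where
  axK : ∀ A B, Logic Ax (.imp (m (.imp A B)) (.imp (m A) (m B)))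
  nec : ∀ {A}, Logic Ax A → Logic Ax (m A)

/-- The substitution `p ↦ A`, `q ↦ B`, which turns the axioms into schemes. Letters other than
`p` and `q` do not occur in them and are sent to `B` as well. -/
def substPQ (A B : BForm) : ℕ → BForm
  | 0 => A
  | _ => B

theorem isNormalModality_box (Ax : Set BForm) : IsNormalModality Ax .box where
  axK A B := .subst (substPQ A B) .axKBox
  nec := .necBox

theorem isNormalModality_dbox (Ax : Set BForm) : IsNormalModality Ax .dbox where
  axK A B := .subst (substPQ A B) .axKD
  nec := .necD

namespace MCS

variable {Ax : Set BForm} {m : BForm → BForm} {x y z : MCS Ax} {A B : BForm}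

theorem mp_logic (h : Logic Ax (.imp A B)) (hA : A ∈ x) : B ∈ x :=
  x.isTheory.mp (x.isTheory.mem_of_logic h) hA

theorem neg_mem_iff : BForm.neg A ∈ x ↔ A ∉ x :=
  ⟨fun hneg hA => x.bot_notMem (x.isTheory.mp hneg hA), (x.mem_or_neg_mem A).resolve_left⟩

theorem imp_mem_iff : BForm.imp A B ∈ x ↔ (A ∈ x → B ∈ x) := by
  refine ⟨x.isTheory.mp, fun h => ?_⟩
  by_cases hA : A ∈ x
  · exact x.isTheory.imp_mem_of_mem A (h hA)
  · have taut : Tautology (.imp (.neg A) (.imp A B)) :=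
      fun v => by simp only [beval_imp_eq_true, beval_neg_eq_true]; tauto
    exact mp_logic (.taut taut) (neg_mem_iff.2 hA)

theorem conj_mem_iff : BForm.conj A B ∈ x ↔ A ∈ x ∧ B ∈ x := by
  rw [BForm.conj, neg_mem_iff, imp_mem_iff, neg_mem_iff, Classical.not_imp, not_not]

theorem exists_mem_notMem_of_ne (h : x ≠ y) : ∃ A, A ∈ x ∧ A ∉ y := by
  by_contra! hle
  refine h (SetLike.ext fun A => ⟨hle A, fun hAy => ?_⟩)
  by_contra hAx
  exact neg_mem_iff.1 (hle _ (neg_mem_iff.2 hAx)) hAy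

/-- The canonical accessibility relation of the modality `m`. -/
def Rel (m : BForm → BForm) (x y : MCS Ax) : Prop := ∀ ⦃A⦄, m A ∈ x → A ∈ y

theorem isTheory_setOf_modality_mem (hm : IsNormalModality Ax m) (x : MCS Ax) :
    IsTheory Ax {A | m A ∈ x} where
  mem_of_logic h := x.isTheory.mem_of_logic (hm.nec h)
  mp hAB hA := x.isTheory.mp (mp_logic (hm.axK _ _) hAB) hA

theorem modality_mem_iff (hm : IsNormalModality Ax m) :
    m A ∈ x ↔ ∀ y, Rel m x y → A ∈ y := by
  refine ⟨fun h y hxy => hxy h, fun h => ?_⟩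
  by_contra hA
  obtain ⟨y, hxy, hAy⟩ := (isTheory_setOf_modality_mem hm x).exists_mcs_notMem hA
  exact hAy (h y hxy)

theorem neg_modality_neg_mem_iff (hm : IsNormalModality Ax m) :
    BForm.neg (m (.neg A)) ∈ x ↔ ∃ y, Rel m x y ∧ A ∈ y := by
  simp only [neg_mem_iff, modality_mem_iff hm, not_forall, not_not, exists_prop]

theorem ksat_canonical_iff :
    ksat (Rel (Ax := Ax) .box) (Rel .dbox) (fun n => {y | BForm.var n ∈ y}) x A ↔ A ∈ x := by
  induction A generalizing x with
  | var n => rfl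
  | bot => exact iff_of_false id x.bot_notMem
  | imp A B ihA ihB => rw [ksat, ihA, ihB, imp_mem_iff]
  | box A ih => simp only [ksat, ih, modality_mem_iff (isNormalModality_box Ax)]
  | dbox A ih => simp only [ksat, ih, modality_mem_iff (isNormalModality_dbox Ax)]

theorem logic_of_kvalid_canonical (h : kvalid (Rel (Ax := Ax) .box) (Rel .dbox) A) :
    Logic Ax A := by
  by_contra hA
  obtain ⟨x, -, hAx⟩ := (IsTheory.logic Ax).exists_mcs_notMem hA
  exact hAx (ksat_canonical_iff.1 (h _ x))

theorem rel_dbox_symm (h : Rel .dbox x y) : Rel .dbox y x := by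
  intro A hA
  by_contra hAx
  have hdd : BForm.dbox (.ddia (.neg A)) ∈ x :=
    mp_logic (.subst (substPQ (.neg A) A) .axBD) (neg_mem_iff.2 hAx)
  obtain ⟨z, hyz, hAz⟩ := (neg_modality_neg_mem_iff (isNormalModality_dbox Ax)).1 (h hdd)
  exact neg_mem_iff.1 hAz (hyz hA)

/-- The witness is `E ∨ A` for some `E ∈ x` with `E ∉ y`. -/
theorem exists_mem_modality_mem_notMem (hm : IsNormalModality Ax m) (hne : x ≠ y)
    (hmA : m A ∈ x) (hA : A ∉ y) : ∃ C, C ∈ x ∧ m C ∈ x ∧ C ∉ y := by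
  obtain ⟨E, hEx, hEy⟩ := exists_mem_notMem_of_ne hne
  refine ⟨.imp (.neg E) A, imp_mem_iff.2 fun h => absurd hEx (neg_mem_iff.1 h),
    (isTheory_setOf_modality_mem hm x).imp_mem_of_mem _ hmA, fun h => ?_⟩
  exact hA (imp_mem_iff.1 h (neg_mem_iff.2 hEy))

theorem rel_dbox_ptrans (hxy : Rel .dbox x y) (hyz : Rel .dbox y z) (hne : x ≠ z) :
    Rel .dbox x z := by
  intro A hA
  by_contra hAz
  obtain ⟨C, hC, hDC, hCz⟩ := exists_mem_modality_mem_notMem (isNormalModality_dbox Ax) hne hA hAz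
  have hDDC : BForm.dbox (.dbox C) ∈ x :=
    mp_logic (.subst (substPQ C C) .ax4mD) (conj_mem_iff.2 ⟨hC, hDC⟩)
  exact hCz (hyz (hxy hDDC))

theorem rel_dbox_of_rel_box (hxy : Rel .box x y) (hne : x ≠ y) : Rel .dbox x y := by
  intro A hA
  by_contra hAy
  obtain ⟨C, hC, hDC, hCy⟩ := exists_mem_modality_mem_notMem (isNormalModality_dbox Ax) hne hA hAy
  have hBC : BForm.box C ∈ x :=
    mp_logic (.subst (substPQ C C) .axDBox) (conj_mem_iff.2 ⟨hDC, hC⟩)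
  exact hCy (hxy hBC)

theorem isS4DFrame_canonical (Ax : Set BForm) :
    IsS4DFrame (Rel (Ax := Ax) .box) (Rel .dbox) where
  refl _ A hA := mp_logic (.subst (substPQ A A) .axTBox) hA
  trans _ _ _ hxy hyz A hA := hyz (hxy (mp_logic (.subst (substPQ A A) .ax4Box) hA))
  symm _ _ := rel_dbox_symm
  ptrans _ _ _ := rel_dbox_ptrans
  inc _ _ hxy := or_iff_not_imp_right.2 (rel_dbox_of_rel_box hxy)

theorem isDSFrame_canonical (hAx : dsAx ∈ Ax) :
    IsDSFrame (Rel (Ax := Ax) .box) (Rel .dbox) := by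
  intro x hx
  obtain ⟨A, hDA, hA⟩ : ∃ A, BForm.dbox A ∈ x ∧ A ∉ x := by simpa [Rel] using hx
  have hdia : BForm.dia A ∈ x := mp_logic (.subst (substPQ A A) (.extra hAx)) hDA
  obtain ⟨y, hxy, hAy⟩ := (neg_modality_neg_mem_iff (isNormalModality_box Ax)).1 hdia
  exact ⟨y, ne_of_mem_of_not_mem' hAy hA, hxy⟩

end MCS

/-! ### Generated subframes -/

section GeneratedSubframe

variable {W : Type} {R RD : W → W → Prop}

theorem ksat_subrel_iff {s : Set W} (hR : ∀ ⦃x y⦄, x ∈ s → R x y → y ∈ s)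
    (hRD : ∀ ⦃x y⦄, x ∈ s → RD x y → y ∈ s) (θ : ℕ → Set W) {A : BForm} {x : s} :
    ksat (Subrel R (· ∈ s)) (Subrel RD (· ∈ s)) (fun n => Subtype.val ⁻¹' θ n) x A ↔
      ksat R RD θ x A := by
  induction A generalizing x with
  | var n => rfl
  | bot => rfl
  | imp A B ihA ihB => simp only [ksat, ihA, ihB]
  | box A ih =>
    simp only [ksat, ih, Subtype.forall]
    exact forall_congr' fun y => ⟨fun h hxy => h (hR x.2 hxy) hxy, fun h _ => h⟩
  | dbox A ih =>
    simp only [ksat, ih, Subtype.forall]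
    exact forall_congr' fun y => ⟨fun h hxy => h (hRD x.2 hxy) hxy, fun h _ => h⟩

theorem IsS4DFrame.subrel (hF : IsS4DFrame R RD) (s : Set W) :
    IsS4DFrame (Subrel R (· ∈ s)) (Subrel RD (· ∈ s)) where
  refl x := hF.refl x
  trans _ _ _ hxy hyz := hF.trans hxy hyz
  symm _ _ hxy := hF.symm hxy
  ptrans _ _ _ hxy hyz hne := hF.ptrans hxy hyz (Subtype.coe_ne_coe.2 hne)
  inc _ _ hxy := (hF.inc hxy).imp_right Subtype.ext

theorem IsDSFrame.subrel (hDS : IsDSFrame R RD) {s : Set W}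
    (hR : ∀ ⦃x y⦄, x ∈ s → R x y → y ∈ s) :
    IsDSFrame (Subrel R (· ∈ s)) (Subrel RD (· ∈ s)) := by
  intro x hx
  obtain ⟨y, hne, hxy⟩ := hDS x hx
  exact ⟨⟨y, hR x.2 hxy⟩, Subtype.coe_ne_coe.1 hne, hxy⟩

/-- The equivalence class of `x` under `R_D ∪ Id`, which in an S4D-frame is the subframe generated
by `x`. -/
def cluster (RD : W → W → Prop) (x : W) : Set W := {y | y = x ∨ RD x y}

namespace IsS4DFrame

variable {x y z : W}

theorem pairwise_cluster (hF : IsS4DFrame R RD) : (cluster RD x).Pairwise RD := by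
  rintro y (rfl | hy) z (rfl | hz) hne
  · exact absurd rfl hne
  · exact hz
  · exact hF.symm hy
  · exact hF.ptrans (hF.symm hy) hz hne

theorem mem_cluster_of_RD (hF : IsS4DFrame R RD) (hy : y ∈ cluster RD x) (hyz : RD y z) :
    z ∈ cluster RD x := by
  obtain rfl | hxy := hy
  · exact .inr hyz
  · exact or_iff_not_imp_left.2 fun hne => hF.ptrans hxy hyz (Ne.symm hne)

theorem mem_cluster_of_R (hF : IsS4DFrame R RD) (hy : y ∈ cluster RD x) (hyz : R y z) :
    z ∈ cluster RD x := by
  obtain hD | rfl := hF.inc hyz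
  · exact hF.mem_cluster_of_RD hy hD
  · exact hy

end IsS4DFrame

end GeneratedSubframe

/-! ### Filtration -/

/-- Closure of a set of formulas under immediate subformulas. -/
structure IsSubformulaClosed (Γ : Set BForm) : Prop where
  imp : ∀ {A B}, BForm.imp A B ∈ Γ → A ∈ Γ ∧ B ∈ Γ
  box : ∀ {A}, BForm.box A ∈ Γ → A ∈ Γ
  dbox : ∀ {A}, BForm.dbox A ∈ Γ → A ∈ Γ

namespace BForm

/-- The subformulas of a formula, itself included; a countermodel is filtrated through them. -/
def subformulas : BForm → Finset BForm
  | var n => {var n}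
  | bot => {bot}
  | imp A B => insert (imp A B) (subformulas A ∪ subformulas B)
  | box A => insert (box A) (subformulas A)
  | dbox A => insert (dbox A) (subformulas A)

theorem self_mem_subformulas (A : BForm) : A ∈ A.subformulas := by
  cases A <;> simp [subformulas]

theorem isSubformulaClosed_subformulas (A : BForm) :
    IsSubformulaClosed (A.subformulas : Set BForm) := by
  constructor <;> intros <;> induction A <;>
    grind [subformulas, self_mem_subformulas]

end BForm

/-- A filtration through `Γ` of the model `(R, RD, θ)` onto the model `(R', RD', θ')`: the
relations of the target lie between the images of `R` and `RD` and the largest relations for which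
boxed formulas of `Γ` keep their meaning. -/
structure IsModalFiltration {W W' : Type} (Γ : Set BForm) (R RD : W → W → Prop) (θ : ℕ → Set W)
    (R' RD' : W' → W' → Prop) (θ' : ℕ → Set W') (f : W → W') : Prop where
  surj : Function.Surjective f
  var : ∀ {n x}, BForm.var n ∈ Γ → (f x ∈ θ' n ↔ x ∈ θ n)
  forth : ∀ ⦃x y⦄, R x y → R' (f x) (f y)
  forthD : ∀ ⦃x y⦄, RD x y → RD' (f x) (f y)
  back : ∀ {A x y}, BForm.box A ∈ Γ → R' (f x) (f y) → ksat R RD θ x (.box A) → ksat R RD θ y A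
  backD : ∀ {A x y}, BForm.dbox A ∈ Γ → RD' (f x) (f y) → ksat R RD θ x (.dbox A) →
    ksat R RD θ y A

section Filtration

variable {W W' : Type} {Γ : Set BForm} {R RD : W → W → Prop} {θ : ℕ → Set W} {A : BForm}

theorem IsModalFiltration.ksat_iff {R' RD' : W' → W' → Prop} {θ' : ℕ → Set W'} {f : W → W'}
    (hf : IsModalFiltration Γ R RD θ R' RD' θ' f) (hΓ : IsSubformulaClosed Γ) (hA : A ∈ Γ) {x : W} :
    ksat R' RD' θ' (f x) A ↔ ksat R RD θ x A := by
  induction A generalizing x with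
  | var n => exact hf.var hA
  | bot => rfl
  | imp A B ihA ihB => rw [ksat, ksat, ihA (hΓ.imp hA).1, ihB (hΓ.imp hA).2]
  | box A ih =>
    simp only [ksat, hf.surj.forall, ih (hΓ.box hA)]
    exact ⟨fun h y hxy => h y (hf.forth hxy), fun h y hxy => hf.back hA hxy h⟩
  | dbox A ih =>
    simp only [ksat, hf.surj.forall, ih (hΓ.dbox hA)]
    exact ⟨fun h y hxy => h y (hf.forthD hxy), fun h y hxy => hf.backD hA hxy h⟩

/-- The formulas of `Γ` true at `x`; it encodes the class of `x` in the filtration through `Γ`. -/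
def formulaTrace (Γ : Set BForm) (R RD : W → W → Prop) (θ : ℕ → Set W) (x : W) : Set BForm :=
  {A ∈ Γ | ksat R RD θ x A}

/-- The transitive (Lemmon) filtration of `R`, as a relation between traces. -/
def lemmonRel (S T : Set BForm) : Prop := ∀ ⦃A⦄, BForm.box A ∈ S → BForm.box A ∈ T

theorem finite_range_formulaTrace (hΓ : Γ.Finite) : (Set.range (formulaTrace Γ R RD θ)).Finite :=
  hΓ.finite_subsets.subset <| Set.range_subset_iff.2 fun _ => Set.sep_subset _ _

theorem lemmonRel_formulaTrace (htrans : ∀ ⦃x y z⦄, R x y → R y z → R x z) {x y : W}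
    (hxy : R x y) :
    lemmonRel (formulaTrace Γ R RD θ x) (formulaTrace Γ R RD θ y) :=
  fun _ hA => ⟨hA.1, fun z hyz => hA.2 z (htrans hxy hyz)⟩

theorem ksat_iff_of_formulaTrace_eq {x y : W}
    (h : formulaTrace Γ R RD θ x = formulaTrace Γ R RD θ y) (hA : A ∈ Γ) :
    ksat R RD θ x A ↔ ksat R RD θ y A := by
  simpa only [formulaTrace, Set.mem_sep_iff, hA, true_and] using Set.ext_iff.1 h A

theorem isModalFiltration_formulaTrace (hΓ : IsSubformulaClosed Γ) (hrefl : ∀ x, R x x)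
    (htrans : ∀ ⦃x y z⦄, R x y → R y z → R x z) :
    let f := Set.rangeFactorization (formulaTrace Γ R RD θ)
    IsModalFiltration Γ R RD θ (fun S T => lemmonRel S.1 T.1) (Relation.Map RD f f)
      (fun n => {S | BForm.var n ∈ S.1}) f where
  surj := Set.rangeFactorization_surjective
  var h := and_iff_right h
  forth _ _ := lemmonRel_formulaTrace htrans
  forthD x y hxy := ⟨x, y, hxy, rfl, rfl⟩
  back {A x y} hA hxy hx := (hxy ⟨hA, hx⟩).2 y (hrefl y)
  backD {A x y} hA hxy hx := by
    obtain ⟨x', y', hD, hx', hy'⟩ := hxy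
    have hx'A : ksat R RD θ x' (.dbox A) :=
      (ksat_iff_of_formulaTrace_eq (congrArg Subtype.val hx') hA).2 hx
    exact (ksat_iff_of_formulaTrace_eq (congrArg Subtype.val hy') (hΓ.dbox hA)).1 (hx'A y' hD)

theorem IsS4DFrame.of_pairwise (hrefl : ∀ x, R x x) (htrans : ∀ ⦃x y z⦄, R x y → R y z → R x z)
    (hsymm : ∀ ⦃x y⦄, RD x y → RD y x) (hpair : Pairwise RD) : IsS4DFrame R RD where
  refl := hrefl
  trans := htrans
  symm := hsymm
  ptrans _ _ _ _ _ hne := hpair hne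
  inc _ _ _ := or_iff_not_imp_right.2 fun hne => hpair hne

theorem pairwise_relationMap {f : W → W'} (hpair : Pairwise RD) (hf : Function.Surjective f) :
    Pairwise (Relation.Map RD f f) :=
  hf.forall₂.2 fun x y hne => ⟨x, y, hpair (ne_of_apply_ne f hne), rfl, rfl⟩

theorem IsDSFrame.relationMap {R' : W' → W' → Prop} {f : W → W'} (hDS : IsDSFrame R RD)
    (hpair : Pairwise RD) (hf : Function.Surjective f) (hR : ∀ ⦃x y⦄, R x y → R' (f x) (f y)) :
    IsDSFrame R' (Relation.Map RD f f) := by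
  refine hf.forall.2 fun x hirr => ?_
  obtain ⟨y, hne, hxy⟩ := hDS x fun hxx => hirr ⟨x, x, hxx, rfl, rfl⟩
  exact ⟨f y, fun hfyx => hirr ⟨x, y, hpair hne.symm, rfl, hfyx⟩, hR hxy⟩

theorem exists_finite_not_kvalid_of_pairwise (hF : IsS4DFrame R RD) (hDS : IsDSFrame R RD)
    (hpair : Pairwise RD) (hA : ¬ kvalid R RD A) :
    ∃ (W' : Type) (R' RD' : W' → W' → Prop), Finite W' ∧ IsS4DFrame R' RD' ∧ IsDSFrame R' RD' ∧
      ¬ kvalid R' RD' A := by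
  simp only [kvalid, not_forall] at hA
  obtain ⟨θ, x, hx⟩ := hA
  have hΓ := A.isSubformulaClosed_subformulas
  have hf := isModalFiltration_formulaTrace (θ := θ) (RD := RD) hΓ hF.refl hF.trans
  refine ⟨_, fun S T => lemmonRel S.1 T.1, _,
    (finite_range_formulaTrace A.subformulas.finite_toSet).to_subtype, ?_,
    hDS.relationMap hpair hf.surj hf.forth, fun h => hx ?_⟩
  · refine .of_pairwise (fun _ _ => id) (fun _ _ _ hST hTU _ hB => hTU (hST hB)) ?_
      (pairwise_relationMap hpair hf.surj)
    rintro _ _ ⟨y, z, hyz, rfl, rfl⟩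
    exact ⟨z, y, hF.symm hyz, rfl, rfl⟩
  · exact (hf.ksat_iff hΓ A.self_mem_subformulas).1 (h _ _)

theorem exists_finite_not_kvalid (hF : IsS4DFrame R RD) (hDS : IsDSFrame R RD)
    (hA : ¬ kvalid R RD A) :
    ∃ (W' : Type) (R' RD' : W' → W' → Prop), Finite W' ∧ IsS4DFrame R' RD' ∧ IsDSFrame R' RD' ∧
      ¬ kvalid R' RD' A := by
  simp only [kvalid, not_forall] at hA
  obtain ⟨θ, x, hx⟩ := hA
  have hR : ∀ ⦃y z⦄, y ∈ cluster RD x → R y z → z ∈ cluster RD x :=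
    fun _ _ => hF.mem_cluster_of_R
  have hRD : ∀ ⦃y z⦄, y ∈ cluster RD x → RD y z → z ∈ cluster RD x :=
    fun _ _ => hF.mem_cluster_of_RD
  refine exists_finite_not_kvalid_of_pairwise (hF.subrel (cluster RD x)) (hDS.subrel hR)
    (fun y z hne => hF.pairwise_cluster y.2 z.2 (Subtype.coe_ne_coe.2 hne)) fun h => hx ?_
  exact (ksat_subrel_iff hR hRD θ (x := ⟨x, .inl rfl⟩)).1 (h _ _)

end Filtration

/-- finite model property of S4DS: `A ∈ S4DS` iff `A` is valid in every
finite S4D-frame that is a DS-frame. -/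
theorem s4ds_fmp (A : BForm) :
    S4DS A ↔ ∀ (W : Type) (R RD : W → W → Prop), Finite W → IsS4DFrame R RD →
      IsDSFrame R RD → kvalid R RD A := by
  constructor
  · intro h W R RD _ hF hDS
    refine hF.kvalid_of_logic ?_ h
    rintro _ rfl
    exact hDS.kvalid_dsAx hF
  · intro h
    by_contra hA
    have hcan : ¬ kvalid (MCS.Rel (Ax := {dsAx}) .box) (MCS.Rel .dbox) A :=
      fun hval => hA (MCS.logic_of_kvalid_canonical hval)
    obtain ⟨W, R, RD, hW, hF, hDS, hnot⟩ := exists_finite_not_kvalid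
      (MCS.isS4DFrame_canonical _) (MCS.isDSFrame_canonical (Set.mem_singleton _)) hcan
    exact hnot (h W R RD hW hF hDS)
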